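/- arXiv:2306.14835 — 7 statements merged into one kernel-verified Lean document; each statement's English description precedes it below -/
import Mathlib

section
/- Let λ₀ ∈ ℝ and δ > 0, and set J = [λ₀ − δ, λ₀ + δ]. Suppose f, h, ε : J → ℝ satisfy f(λ) = h(λ) + ε(λ) for all λ ∈ J, f is continuous on J, h is differentiable on J with h(λ₀) = 0, l := inf_{λ ∈ J} |h′(λ)| > 0, and M := sup_{λ ∈ J} |ε(λ)| < min{|h(λ₀ − δ)|, |h(λ₀ + δ)|}. Then there exists λ_z ∈ J with f(λ_z) = 0 and |λ_z − λ₀| ≤ M / l. -/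
/-!
By Darboux's theorem `h'`, which never vanishes on `J`, has constant sign there, so by the mean
value theorem `h` takes nonzero values of opposite signs at the two endpoints. Since `|ε| ≤ M` is
smaller than `|h|` at both endpoints, `f` has the same signs there, and the intermediate value
theorem gives a zero `lamz` of `f`. At this zero `|h lamz| = |ε lamz| ≤ M`, while the mean value
theorem between `lam0` and `lamz` gives `l * |lamz - lam0| ≤ |h lamz|`.
-/

/-- Zero-location lemma (Hethcote): a continuous perturbation of a differentiable
function with a simple zero has a nearby zero, with an explicit displacement bound. -/
theorem stmt0 (lam0 δ : ℝ) (hδ : 0 < δ)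
    (J : Set ℝ) (hJ : J = Set.Icc (lam0 - δ) (lam0 + δ))
    (f h ε h' : ℝ → ℝ)
    (hfh : ∀ lam ∈ J, f lam = h lam + ε lam)
    (hf : ContinuousOn f J)
    (hh : ∀ lam ∈ J, HasDerivAt h (h' lam) lam)
    (h0 : h lam0 = 0)
    (l M : ℝ)
    (hl : l = sInf ((fun lam => |h' lam|) '' J))
    (hlpos : 0 < l)
    (hM : M = sSup ((fun lam => |ε lam|) '' J))
    (hMlt : M < min |h (lam0 - δ)| |h (lam0 + δ)|) :
    ∃ lamz ∈ J, f lamz = 0 ∧ |lamz - lam0| ≤ M / l := by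
  subst hJ
  set J := Set.Icc (lam0 - δ) (lam0 + δ) with hJ
  have ha : lam0 - δ ∈ J := ⟨le_rfl, by linarith⟩
  have hb : lam0 + δ ∈ J := ⟨by linarith, le_rfl⟩
  have h0J : lam0 ∈ J := ⟨by linarith, by linarith⟩
  have hhc : ContinuousOn h J := fun x hx => (hh x hx).continuousAt.continuousWithinAt
  -- `ε = f - h` is continuous on the compact set `J`, so the supremum `M` is a genuine bound.
  have hεc : ContinuousOn ε J :=
    (hf.sub hhc).congr fun x hx => by simp [hfh x hx]
  have hεM : ∀ x ∈ J, |ε x| ≤ M := fun x hx => by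
    rw [hM]
    exact le_csSup (isCompact_Icc.image_of_continuousOn hεc.abs).bddAbove ⟨x, hx, rfl⟩
  have hh'l : ∀ x ∈ J, l ≤ |h' x| := fun x hx => by
    rw [hl]
    refine csInf_le ⟨0, ?_⟩ ⟨x, hx, rfl⟩
    rintro _ ⟨y, -, rfl⟩
    exact abs_nonneg _
  have mvt : ∀ x ∈ J, ∀ y ∈ J, x < y → ∃ c ∈ J, h y - h x = h' c * (y - x) := by
    intro x hx y hy hxy
    have hsub : Set.Icc x y ⊆ J := Set.Icc_subset_Icc hx.1 hy.2
    obtain ⟨c, hc, hce⟩ := exists_hasDerivAt_eq_slope h h' hxy (hhc.mono hsub)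
      fun z hz => hh z (hsub (Set.Ioo_subset_Icc_self hz))
    refine ⟨c, hsub (Set.Ioo_subset_Icc_self hc), ?_⟩
    rw [hce, div_mul_cancel₀ _ (sub_ne_zero.2 hxy.ne')]
  have hfz : (0 : ℝ) ∈ f '' J := by
    obtain ⟨c, hc, hce⟩ := mvt _ ha _ h0J (by linarith)
    obtain ⟨d, hd, hde⟩ := mvt _ h0J _ hb (by linarith)
    have hεa := (abs_le.1 (hεM _ ha))
    have hεb := (abs_le.1 (hεM _ hb))
    have hMa := hMlt.trans_le (min_le_left _ _)
    have hMb := hMlt.trans_le (min_le_right _ _)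
    have hfa := hfh _ ha
    have hfb := hfh _ hb
    have hne : ∀ x ∈ J, h' x ≠ 0 := fun x hx => abs_pos.1 (hlpos.trans_le (hh'l x hx))
    have hab : lam0 - δ ≤ lam0 + δ := by linarith
    rcases hasDerivWithinAt_forall_lt_or_forall_gt_of_forall_ne (convex_Icc _ _)
      (fun x hx => (hh x hx).hasDerivWithinAt) hne with hs | hs
    · have h1 := mul_neg_of_neg_of_pos (hs c hc) hδ
      have h2 := mul_neg_of_neg_of_pos (hs d hd) hδ
      rw [abs_of_pos (by linarith)] at hMa
      rw [abs_of_neg (by linarith)] at hMb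
      exact intermediate_value_Icc' hab hf ⟨by linarith, by linarith⟩
    · have h1 := mul_pos (hs c hc) hδ
      have h2 := mul_pos (hs d hd) hδ
      rw [abs_of_neg (by linarith)] at hMa
      rw [abs_of_pos (by linarith)] at hMb
      exact intermediate_value_Icc hab hf ⟨by linarith, by linarith⟩
  obtain ⟨z, hz, hfz⟩ := hfz
  refine ⟨z, hz, hfz, ?_⟩
  have hhz : |h z| ≤ M := by
    have : h z = -ε z := by linarith [hfh z hz]
    rw [this, abs_neg]
    exact hεM z hz
  rw [le_div_iff₀ hlpos, mul_comm]
  refine le_trans ?_ hhz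
  have key : ∃ c ∈ J, h z = h' c * (z - lam0) := by
    rcases lt_trichotomy z lam0 with hlt | rfl | hlt
    · obtain ⟨c, hc, hce⟩ := mvt z hz _ h0J hlt
      exact ⟨c, hc, by linarith⟩
    · exact ⟨z, hz, by simp [h0]⟩
    · obtain ⟨c, hc, hce⟩ := mvt _ h0J z hz hlt
      exact ⟨c, hc, by linarith⟩
  obtain ⟨c, hc, hce⟩ := key
  rw [hce, abs_mul]
  exact mul_le_mul_of_nonneg_right (hh'l c hc) (abs_nonneg _)
end

section
/- Let 0 < ρ < 1 and set ν = −(1/(2πi)) ln(1 − ρ²) ∈ ℂ. Let z₊ > 0, z₋ = −z₊, and define φ(z) = ((z − z₋)/(z − z₊))^ν using the principal branch of the complex power. Then φ is holomorphic on ℂ ∖ [z₋, z₊], and φ(z) → 1 as z → ∞ (i.e., along the filter of neighborhoods of infinity in ℂ). -/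
open Complex Filter Topology Bornology

/-!
The Möbius map `z ↦ (z + a) / (z - a)`, with `a > 0`, sends only points of `[-a, a]` to the
closed negative axis: if its value is a real `t ≤ 0`, then `z = -a (1 + t) / (1 - t)`. Off
`[-a, a]` it therefore takes values in the slit plane, where the principal power is holomorphic.
At infinity it equals `1 + 2 a / (z - a) → 1`, and the principal power is continuous at `1`
with value `1`.
-/

lemma moebius_mem_slitPlane {a : ℝ} (ha : 0 < a) {z : ℂ}
    (hz : z ∉ (fun x : ℝ => (x : ℂ)) '' Set.Icc (-a) a) :
    z - (a : ℂ) ≠ 0 ∧ (z + (a : ℂ)) / (z - (a : ℂ)) ∈ slitPlane := by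
  have hne : z - (a : ℂ) ≠ 0 := fun h =>
    hz ⟨a, ⟨by linarith, le_rfl⟩, (sub_eq_zero.mp h).symm⟩
  refine ⟨hne, ?_⟩
  by_contra hw
  rw [mem_slitPlane_iff] at hw
  push Not at hw
  obtain ⟨hre, him⟩ := hw
  set t : ℝ := ((z + (a : ℂ)) / (z - (a : ℂ))).re with ht
  have hwt : (z + (a : ℂ)) / (z - (a : ℂ)) = (t : ℂ) := Complex.ext (by simp [ht]) (by simp [him])
  rw [div_eq_iff hne] at hwt
  have h1 : 0 < 1 - t := by linarith
  have h1c : (1 : ℂ) - (t : ℂ) ≠ 0 := by exact_mod_cast h1.ne'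
  refine hz ⟨-a * (1 + t) / (1 - t), ⟨?_, ?_⟩, ?_⟩
  · rw [le_div_iff₀ h1]; nlinarith
  · rw [div_le_iff₀ h1]; nlinarith
  · push_cast
    rw [div_eq_iff h1c]
    linear_combination -hwt

/-- The scalar global parametrix `φ(z) = ((z - z₋)/(z - z₊))^ν` (principal branch),
with `z₋ = -z₊` and `ν = -(1/(2πi)) log(1 - ρ²)`, is holomorphic off the segment
`[z₋, z₊]` and tends to `1` at infinity. -/
theorem stmt4 (ρ : ℝ) (hρ : 0 < ρ) (hρ1 : ρ < 1)
    (ν : ℂ) (hν : ν = -(1 / (2 * Real.pi * Complex.I)) * Complex.log (1 - (ρ : ℂ) ^ 2))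
    (zp : ℝ) (hzp : 0 < zp)
    (φ : ℂ → ℂ) (hφ : φ = fun z => ((z + (zp : ℂ)) / (z - (zp : ℂ))) ^ ν) :
    DifferentiableOn ℂ φ (((fun x : ℝ => (x : ℂ)) '' Set.Icc (-zp) zp)ᶜ) ∧
    Tendsto φ (cobounded ℂ) (𝓝 1) := by
  subst hφ
  constructor
  · intro z hz
    obtain ⟨hne, hs⟩ := moebius_mem_slitPlane hzp hz
    have hd : DifferentiableAt ℂ (fun z : ℂ => (z + (zp : ℂ)) / (z - (zp : ℂ))) z :=
      (differentiableAt_id.add_const _).div (differentiableAt_id.sub_const _) hne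
    exact (hd.cpow (differentiableAt_const ν) hs).differentiableWithinAt
  · have hsub : Tendsto (fun z : ℂ => z - (zp : ℂ)) (cobounded ℂ) (cobounded ℂ) :=
      tendsto_sub_const_cobounded _
    have hinv : Tendsto (fun z : ℂ => 1 + 2 * (zp : ℂ) * (z - (zp : ℂ))⁻¹)
        (cobounded ℂ) (𝓝 1) := by
      simpa using ((tendsto_inv₀_cobounded.comp hsub).const_mul (2 * (zp : ℂ))).const_add 1
    have hw : Tendsto (fun z : ℂ => (z + (zp : ℂ)) / (z - (zp : ℂ))) (cobounded ℂ) (𝓝 1) := by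
      refine hinv.congr' ?_
      filter_upwards [hsub.eventually (eventually_ne_cobounded 0)] with z hz
      field_simp
      ring
    simpa using hw.cpow (tendsto_const_nhds (x := ν)) one_mem_slitPlane
end

section
/- For every integer n ≥ 1 and every x ∈ ℝ, the improper integral (1/π)·∫₀^{+∞} cos(s^{2n+1}/(2n+1) + x·s) ds converges; that is, the limit as R → +∞ of (1/π)·∫₀^R cos(s^{2n+1}/(2n+1) + x·s) ds exists in ℝ. -/
open Filter Topology

/-!
Let `φ(s) = s^(2n+1)/(2n+1) + x s` be the phase. Past the point `a = 1 + |x|` its derivative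
`p(s) = s^(2n) + x` is positive, nondecreasing and tends to infinity. Writing
`cos φ = (1/p) · (sin φ)'` and integrating by parts over `[a, R]` leaves the boundary terms, which
converge because `1/p → 0`, and the integral of `(1/p)' sin φ`, which converges absolutely because
`1/p` is monotone with a finite limit. This is `exists_tendsto_integral_cos`, for a general phase.
-/

/-- Convergence of `∫ cos φ` at infinity for a convex phase `φ` whose derivative `p` is positive
and tends to infinity. -/
lemma exists_tendsto_integral_cos {φ p q : ℝ → ℝ} {a : ℝ}
    (hφ : ∀ s, HasDerivAt φ (p s) s) (hp : ∀ s, HasDerivAt p (q s) s) (hq : Continuous q)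
    (hpos : ∀ s, a ≤ s → 0 < p s) (hq0 : ∀ s, a ≤ s → 0 ≤ q s) (hlim : Tendsto p atTop atTop) :
    ∃ L : ℝ, Tendsto (fun R : ℝ => ∫ s in a..R, Real.cos (φ s)) atTop (𝓝 L) := by
  have hφc : Continuous φ := continuous_iff_continuousAt.2 fun s => (hφ s).continuousAt
  have hpc : Continuous p := continuous_iff_continuousAt.2 fun s => (hp s).continuousAt
  have hu : ∀ s, a ≤ s → HasDerivAt (fun s => (p s)⁻¹) (-q s / p s ^ 2) s := fun s hs =>
    (hp s).fun_inv (hpos s hs).ne'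
  have hv : ∀ s, HasDerivAt (fun s => Real.sin (φ s)) (Real.cos (φ s) * p s) s := fun s =>
    (hφ s).sin
  have hu0 : Tendsto (fun s => (p s)⁻¹) atTop (𝓝 0) := tendsto_inv_atTop_zero.comp hlim
  have hint : MeasureTheory.IntegrableOn (fun s => -q s / p s ^ 2) (Set.Ioi a) :=
    MeasureTheory.integrableOn_Ioi_deriv_of_nonpos' (fun s hs => hu s hs)
      (fun s hs => div_nonpos_of_nonpos_of_nonneg (neg_nonpos.2 (hq0 s (le_of_lt hs)))
        (sq_nonneg _)) hu0
  have hint2 : MeasureTheory.IntegrableOn (fun s => -q s / p s ^ 2 * Real.sin (φ s))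
      (Set.Ioi a) := by
    refine MeasureTheory.Integrable.mul_bdd (c := 1) hint ?_ ?_
    · exact (Real.continuous_sin.comp hφc).aestronglyMeasurable
    · exact Eventually.of_forall fun s => Real.abs_sin_le_one _
  have hbdry : Tendsto (fun R => (p R)⁻¹ * Real.sin (φ R)) atTop (𝓝 0) := by
    refine squeeze_zero_norm (a := fun R => ‖(p R)⁻¹‖) (fun R => ?_) (by simpa using hu0.norm)
    rw [norm_mul]
    exact mul_le_of_le_one_right (norm_nonneg _) (Real.abs_sin_le_one _)
  refine ⟨_, Tendsto.congr' ?_ ((hbdry.sub_const ((p a)⁻¹ * Real.sin (φ a))).sub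
    (MeasureTheory.intervalIntegral_tendsto_integral_Ioi a hint2 tendsto_id))⟩
  filter_upwards [eventually_ge_atTop a] with R hR
  have hmem : ∀ s ∈ Set.uIcc a R, a ≤ s := fun s hs => by
    rw [Set.uIcc_of_le hR] at hs
    exact hs.1
  have hparts := intervalIntegral.integral_mul_deriv_eq_deriv_mul
    (fun s hs => hu s (hmem s hs)) (fun s _ => hv s)
    (ContinuousOn.intervalIntegrable (hq.neg.continuousOn.div (hpc.pow 2).continuousOn
      fun s hs => (pow_pos (hpos s (hmem s hs)) 2).ne'))
    (((Real.continuous_cos.comp hφc).mul hpc).intervalIntegrable a R)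
  simp only [id]
  rw [← hparts]
  refine intervalIntegral.integral_congr fun s hs => ?_
  have := (hpos s (hmem s hs)).ne'
  field_simp

/-- Convergence of the oscillatory integral defining the higher order Airy function
`Ai_{2n+1}(x) = (1/π) ∫₀^∞ cos(s^(2n+1)/(2n+1) + xs) ds`. -/
theorem stmt9 (n : ℕ) (hn : 1 ≤ n) (x : ℝ) :
    ∃ L : ℝ, Tendsto (fun R : ℝ =>
        (1 / Real.pi) * ∫ s in (0:ℝ)..R,
          Real.cos (s ^ (2 * n + 1) / (2 * (n : ℝ) + 1) + x * s))
      atTop (𝓝 L) := by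
  obtain ⟨L, hL⟩ := exists_tendsto_integral_cos (a := 1 + |x|)
    (φ := fun s : ℝ => s ^ (2 * n + 1) / (2 * (n : ℝ) + 1) + x * s)
    (p := fun s => s ^ (2 * n) + x) (q := fun s => (2 * n : ℕ) * s ^ (2 * n - 1))
    (fun s => by
      have h := ((hasDerivAt_pow (2 * n + 1) s).div_const (2 * (n : ℝ) + 1)).add
        ((hasDerivAt_id s).const_mul x)
      refine h.congr_deriv ?_
      have : (2 * (n : ℝ) + 1) ≠ 0 := by positivity
      push_cast
      field_simp)
    (fun s => (hasDerivAt_pow (2 * n) s).add_const x) (by fun_prop)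
    (fun s hs => by
      have h1 : 1 ≤ s := by linarith [abs_nonneg x]
      have h2 : s ≤ s ^ (2 * n) := le_self_pow₀ h1 (by omega)
      linarith [neg_abs_le x])
    (fun s hs => by
      have : 0 ≤ s := by linarith [abs_nonneg x]
      positivity)
    (tendsto_atTop_add_const_right _ _ (tendsto_pow_atTop (by omega)))
  have hc : Continuous fun s : ℝ =>
      Real.cos (s ^ (2 * n + 1) / (2 * (n : ℝ) + 1) + x * s) := by fun_prop
  refine ⟨_, ((hL.const_add (∫ s in (0:ℝ)..(1 + |x|),
    Real.cos (s ^ (2 * n + 1) / (2 * (n : ℝ) + 1) + x * s))).const_mul (1 / Real.pi)).congr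
      fun R => ?_⟩
  rw [intervalIntegral.integral_add_adjacent_intervals (hc.intervalIntegrable _ _)
    (hc.intervalIntegrable _ _)]
end

section
/- Let z₊ be a nonzero real number and c ∈ ℂ with c² ≠ 1. Define the 2×2 complex matrices A = [[0, 2z₊c/(1 − c²)], [0, 2z₊c²/(1 − c²)]], B = [[−2z₊c²/(1 − c²), 0], [−2z₊c/(1 − c²), 0]], and σ₁ = [[0, 1], [1, 0]]. Then: (i) (I + (2z₊)^{−1}·A) · [[0, 0], [2z₊c, 0]] + B = 0; (ii) σ₁·A·σ₁ = −B; and (iii) for every z ∈ ℂ with z ≠ z₊ and z ≠ −z₊, det(I + (z + z₊)^{−1}·A + (z − z₊)^{−1}·B) = 1. -/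
open Matrix

/-- Residue matrices of the modified global parametrix for `ρ > 1`: the matrices
`A`, `B` satisfy the removability condition, the symmetry `σ₁ A σ₁ = -B`, and the
resulting rational matrix `V(z) = I + A/(z - z₋) + B/(z - z₊)` has determinant 1. -/
theorem stmt10 (zp : ℝ) (hzp : zp ≠ 0) (c : ℂ) (hc : c ^ 2 ≠ 1)
    (A B σ₁ : Matrix (Fin 2) (Fin 2) ℂ)
    (hA : A = !![0, 2 * (zp : ℂ) * c / (1 - c ^ 2); 0, 2 * (zp : ℂ) * c ^ 2 / (1 - c ^ 2)])
    (hB : B = !![-(2 * (zp : ℂ) * c ^ 2 / (1 - c ^ 2)), 0;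
                 -(2 * (zp : ℂ) * c / (1 - c ^ 2)), 0])
    (hσ : σ₁ = !![0, 1; 1, 0]) :
    ((1 + (2 * (zp : ℂ))⁻¹ • A) * !![0, 0; 2 * (zp : ℂ) * c, 0] + B = 0) ∧
    (σ₁ * A * σ₁ = -B) ∧
    (∀ z : ℂ, z ≠ (zp : ℂ) → z ≠ -(zp : ℂ) →
      Matrix.det (1 + (z + (zp : ℂ))⁻¹ • A + (z - (zp : ℂ))⁻¹ • B) = 1) := by
  have hz : (zp : ℂ) ≠ 0 := by exact_mod_cast hzp
  have hd : 1 - c ^ 2 ≠ 0 := fun h => hc (sub_eq_zero.mp h).symm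
  subst hA hB hσ
  refine ⟨?_, ?_, fun z h1 h2 => ?_⟩
  · ext i j
    fin_cases i <;> fin_cases j <;> simp [Matrix.mul_apply, Fin.sum_univ_two]
    · field_simp
      ring
    · field_simp
      ring
  · ext i j
    fin_cases i <;> fin_cases j <;> simp [Matrix.mul_apply, Fin.sum_univ_two]
  · have hm : z - (zp : ℂ) ≠ 0 := sub_ne_zero.mpr h1
    have hp : z + (zp : ℂ) ≠ 0 := fun h => h2 (eq_neg_of_add_eq_zero_left h)
    -- With `k = 2 z₊ c / (1 - c²)`, the numerator of `det V - 1` over `z² - z₊²` is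
    -- `k² (1 - c²) - 2 z₊ k c = 0`.
    simp [Matrix.det_fin_two]
    field_simp
    ring
end

section
/- Let n ≥ 1 be an integer and τ₁, …, τ_{n−1} ∈ ℝ. Let Q(w) = w^{2n} + Σ_{j=1}^{n−1} (−1)^{n+j} τ_j w^{2j}, and for x < 0 define g(z) = i(2z)^{2n+1}/(4n+2) − iz + i·Σ_{j=1}^{n−1} (−1)^{n+j} τ_j (2z)^{2j+1}/(4j+2) · |x|^{(j−n)/n}. Then there exists T > 0 such that for every x < −T the equation Q(w) = |x| has a unique positive solution z₀(|x|); setting z₊(x) = z₀(|x|)/(2|x|^{1/(2n)}), the function G(x) := g(z₊(x)) · |x|^{(2n+1)/(2n)} is differentiable on (−∞, −T) with G′(x) = i · |x|^{1/(2n)} · z₊(x). -/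
open Complex

/-!
The powers of `|y|` in `g` are chosen so that, with `w = z₀ y`,
`G y = i (P w - |y| w / 2)`, where `P` is the odd antiderivative of `Q / 2`
(`phase_rescale`). Differentiating, the coefficient of `w'` is `(Q w - |y|) / 2 = 0`,
and only the explicit dependence on `|y| = -y` contributes, giving `i w / 2`.

For the existence, uniqueness and differentiability of `z₀`: both `Q` and `Q'` tend to
infinity, so `Q` is strictly increasing on some `[W, ∞)`, and any value exceeding the
maximum of `Q` on `[0, W]` is attained exactly once on `(0, ∞)`, at a point where
`Q' > 0` (`exists_threshold`). The inverse function theorem then makes every selection of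
solutions differentiable (`hasDerivAt_solution`).
-/

/-- The polynomial whose evaluation is `Q`, with `c j` in place of `(-1) ^ (n + j) * τ j`. -/
noncomputable def evenPoly (n : ℕ) (c : ℕ → ℝ) : Polynomial ℝ :=
  Polynomial.X ^ (2 * n) +
    ∑ j ∈ Finset.Icc 1 (n - 1), Polynomial.C (c j) * Polynomial.X ^ (2 * j)

/-- The odd antiderivative of half of `evenPoly n c`. -/
noncomputable def oddPrimitive (n : ℕ) (c : ℕ → ℝ) (w : ℝ) : ℝ :=
  w ^ (2 * n + 1) / (4 * n + 2) +
    ∑ j ∈ Finset.Icc 1 (n - 1), c j * w ^ (2 * j + 1) / (4 * j + 2)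

lemma evenPoly_eval (n : ℕ) (c : ℕ → ℝ) (w : ℝ) :
    (evenPoly n c).eval w =
      w ^ (2 * n) + ∑ j ∈ Finset.Icc 1 (n - 1), c j * w ^ (2 * j) := by
  simp [evenPoly, Polynomial.eval_finsetSum]

lemma evenPoly_degree_lower (n : ℕ) (hn : 1 ≤ n) (c : ℕ → ℝ) :
    (∑ j ∈ Finset.Icc 1 (n - 1),
      Polynomial.C (c j) * Polynomial.X ^ (2 * j) : Polynomial ℝ).degree
        < ((2 * n : ℕ) : WithBot ℕ) := by
  refine lt_of_le_of_lt (Polynomial.degree_sum_le _ _) ?_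
  rw [Finset.sup_lt_iff (WithBot.bot_lt_coe _)]
  intro j hj
  refine lt_of_le_of_lt (Polynomial.degree_C_mul_X_pow_le _ _) ?_
  rw [Finset.mem_Icc] at hj
  exact_mod_cast (by omega : 2 * j < 2 * n)

lemma evenPoly_monic (n : ℕ) (hn : 1 ≤ n) (c : ℕ → ℝ) : (evenPoly n c).Monic :=
  Polynomial.monic_X_pow_add (evenPoly_degree_lower n hn c)

lemma evenPoly_natDegree (n : ℕ) (hn : 1 ≤ n) (c : ℕ → ℝ) :
    (evenPoly n c).natDegree = 2 * n := by
  have h : (evenPoly n c).degree = ((2 * n : ℕ) : WithBot ℕ) := by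
    unfold evenPoly
    rw [Polynomial.degree_add_eq_left_of_degree_lt] <;> rw [Polynomial.degree_X_pow]
    exact evenPoly_degree_lower n hn c
  exact Polynomial.natDegree_eq_of_degree_eq_some h

lemma evenPoly_tendsto (n : ℕ) (hn : 1 ≤ n) (c : ℕ → ℝ) :
    Filter.Tendsto (fun w => (evenPoly n c).eval w) Filter.atTop Filter.atTop := by
  apply Polynomial.tendsto_atTop_of_leadingCoeff_nonneg
  · apply Polynomial.natDegree_pos_iff_degree_pos.mp
    rw [evenPoly_natDegree n hn c]; omega
  · rw [(evenPoly_monic n hn c).leadingCoeff]; exact zero_le_one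

lemma evenPoly_derivative_tendsto (n : ℕ) (hn : 1 ≤ n) (c : ℕ → ℝ) :
    Filter.Tendsto (fun w => (evenPoly n c).derivative.eval w)
      Filter.atTop Filter.atTop := by
  have hd : (evenPoly n c).derivative.natDegree = 2 * n - 1 := by
    rw [Polynomial.natDegree_derivative, evenPoly_natDegree n hn c]
  apply Polynomial.tendsto_atTop_of_leadingCoeff_nonneg
  · apply Polynomial.natDegree_pos_iff_degree_pos.mp
    rw [hd]; omega
  · have hm := (evenPoly_monic n hn c).coeff_natDegree
    rw [evenPoly_natDegree n hn c] at hm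
    rw [Polynomial.leadingCoeff, hd, Polynomial.coeff_derivative,
      show 2 * n - 1 + 1 = 2 * n by omega, hm]
    positivity

/-- Above a suitable level, a polynomial with `p → ∞` and `p' → ∞` takes each value exactly
once on the positive axis, and with positive derivative. -/
lemma exists_threshold (p : Polynomial ℝ)
    (hp : Filter.Tendsto (fun w => p.eval w) Filter.atTop Filter.atTop)
    (hp' : Filter.Tendsto (fun w => p.derivative.eval w) Filter.atTop Filter.atTop) :
    ∃ T > 0, ∀ s, T < s →
      (∃! w : ℝ, 0 < w ∧ p.eval w = s) ∧
        ∀ w, 0 < w → p.eval w = s → 0 < p.derivative.eval w := by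
  obtain ⟨W, hW⟩ := Filter.eventually_atTop.mp
    ((hp'.eventually_gt_atTop 0).and (Filter.eventually_gt_atTop 0))
  have hW0 : 0 < W := (hW W le_rfl).2
  obtain ⟨M, hM⟩ := (isCompact_Icc (a := (0 : ℝ)) (b := W)).bddAbove_image
    (f := fun w => p.eval w) p.continuous.continuousOn
  have hM' : ∀ w, 0 ≤ w → w ≤ W → p.eval w ≤ M := fun w h0 h1 =>
    hM (Set.mem_image_of_mem _ ⟨h0, h1⟩)
  have hmono : StrictMonoOn (fun w => p.eval w) (Set.Ici W) := by
    apply strictMonoOn_of_deriv_pos (convex_Ici W) p.continuous.continuousOn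
    intro w hw
    rw [interior_Ici] at hw
    rw [Polynomial.deriv]
    exact (hW w (le_of_lt hw)).1
  refine ⟨max M 1, by positivity, fun s hs => ?_⟩
  have hsM : M < s := lt_of_le_of_lt (le_max_left _ _) hs
  have hbig : ∀ w, 0 < w → p.eval w = s → W < w := by
    intro w hw he
    by_contra h
    have := hM' w hw.le (not_lt.mp h)
    linarith
  refine ⟨?_, fun w hw he => (hW w (hbig w hw he).le).1⟩
  obtain ⟨B, hB⟩ := Filter.eventually_atTop.mp
    ((hp.eventually_ge_atTop s).and (Filter.eventually_ge_atTop W))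
  obtain ⟨hBs, hBW⟩ := hB B le_rfl
  obtain ⟨w, hw, he⟩ := intermediate_value_Icc hBW p.continuous.continuousOn
    (show s ∈ Set.Icc (p.eval W) (p.eval B) from
      ⟨(hM' W hW0.le le_rfl).trans hsM.le, hBs⟩)
  refine ⟨w, ⟨hW0.trans_le hw.1, he⟩, fun v hv => ?_⟩
  exact hmono.injOn (Set.mem_Ici.mpr (hbig v hv.1 hv.2).le) (Set.mem_Ici.mpr hw.1)
    (hv.2.trans he.symm)

/-- The local inverse of `p` takes positive values near `|x|`, so uniqueness of positive
solutions identifies it with `z₀`. -/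
lemma hasDerivAt_solution (p : Polynomial ℝ) (T : ℝ) (hT : 0 < T)
    (h : ∀ s, T < s → (∃! w : ℝ, 0 < w ∧ p.eval w = s) ∧
        ∀ w, 0 < w → p.eval w = s → 0 < p.derivative.eval w)
    (z₀ : ℝ → ℝ) (hz : ∀ x : ℝ, x < -T → 0 < z₀ x ∧ p.eval (z₀ x) = |x|)
    (x : ℝ) (hx : x < -T) : ∃ d, HasDerivAt z₀ d x := by
  have habs : ∀ y : ℝ, y < -T → |y| = -y := fun y hy => abs_of_neg (by linarith)
  obtain ⟨hpos, heq⟩ := hz x hx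
  have hd := (h |x| (by rw [habs x hx]; linarith)).2 _ hpos heq
  have hs := p.hasStrictDerivAt (z₀ x)
  set l := hs.localInverse _ _ _ hd.ne' with hl
  have hpx : p.eval (z₀ x) = -x := heq.trans (habs x hx)
  have hlinv : HasStrictDerivAt l _ (p.eval (z₀ x)) := hs.to_localInverse hd.ne'
  have hlx : l (p.eval (z₀ x)) = z₀ x :=
    (hs.hasStrictFDerivAt_equiv hd.ne').localInverse_apply_image
  have hright : ∀ᶠ s in nhds (p.eval (z₀ x)), p.eval (l s) = s :=
    (hs.hasStrictFDerivAt_equiv hd.ne').eventually_right_inverse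
  have hlpos : ∀ᶠ s in nhds (p.eval (z₀ x)), 0 < l s :=
    hlinv.hasDerivAt.continuousAt.eventually (lt_mem_nhds (by rw [hlx]; exact hpos))
  rw [hpx] at hright hlpos hlinv
  have hneg : Filter.Tendsto (fun y : ℝ => -y) (nhds x) (nhds (-x)) :=
    continuous_neg.tendsto x
  have hev : z₀ =ᶠ[nhds x] fun y => l (-y) := by
    filter_upwards [hneg.eventually hright, hneg.eventually hlpos, gt_mem_nhds hx]
      with y h1 h2 h3
    have hy := hz y h3
    rw [habs y h3] at hy
    exact (h (-y) (by linarith)).1.unique hy ⟨h2, h1⟩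
  exact ⟨_, (hlinv.hasDerivAt.comp x (hasDerivAt_neg x)).congr_of_eventuallyEq hev⟩

lemma oddPrimitive_hasDerivAt (n : ℕ) (c : ℕ → ℝ) (w : ℝ) :
    HasDerivAt (oddPrimitive n c) ((evenPoly n c).eval w / 2) w := by
  have hmono : ∀ (k : ℕ) (a : ℝ),
      HasDerivAt (fun w : ℝ => a * w ^ (2 * k + 1) / (4 * k + 2)) (a * w ^ (2 * k) / 2) w := by
    intro k a
    refine (((hasDerivAt_pow (2 * k + 1) w).const_mul a).div_const
      (4 * (k : ℝ) + 2)).congr_deriv ?_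
    have : (4 * (k : ℝ) + 2) ≠ 0 := by positivity
    rw [Nat.add_sub_cancel, div_eq_div_iff this two_ne_zero]
    push_cast
    ring
  have h1 := hmono n 1
  simp only [one_mul] at h1
  have h2 := HasDerivAt.fun_sum (u := Finset.Icc 1 (n - 1)) (fun j _ => hmono j (c j))
  rw [evenPoly_eval, add_div, Finset.sum_div]
  exact h1.add h2

/-- After the substitution `2z = w / s ^ (1 / (2n))` all fractional powers of `s` cancel
against the prefactor `s ^ ((2n + 1) / (2n))`. -/
lemma rescale_term (n : ℕ) (hn : 1 ≤ n) (j : ℕ) (s w : ℝ) (hs : 0 < s) :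
    (2 * (w / (2 * s ^ ((1 : ℝ) / (2 * (n : ℝ)))))) ^ (2 * j + 1) *
      (s ^ (((j : ℝ) - n) / n) * s ^ ((2 * (n : ℝ) + 1) / (2 * n))) = w ^ (2 * j + 1) := by
  have hn0 : (n : ℝ) ≠ 0 := by positivity
  have h1 : (s ^ ((1 : ℝ) / (2 * (n : ℝ)))) ^ (2 * j + 1) =
      s ^ (((j : ℝ) - n) / n) * s ^ ((2 * (n : ℝ) + 1) / (2 * n)) := by
    rw [← Real.rpow_natCast, ← Real.rpow_mul hs.le, ← Real.rpow_add hs]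
    congr 1
    push_cast
    field_simp
    ring
  have hr : 0 < s ^ ((1 : ℝ) / (2 * (n : ℝ))) := Real.rpow_pos_of_pos hs _
  rw [← h1, ← mul_pow]
  congr 1
  field_simp

lemma phase_rescale (n : ℕ) (hn : 1 ≤ n) (c : ℕ → ℝ) (s w : ℝ) (hs : 0 < s) (z : ℝ)
    (hz : z = w / (2 * s ^ ((1 : ℝ) / (2 * (n : ℝ))))) :
    ((2 * z) ^ (2 * n + 1) / (4 * n + 2) - z + ∑ j ∈ Finset.Icc 1 (n - 1),
      c j * (2 * z) ^ (2 * j + 1) / (4 * j + 2) * s ^ (((j : ℝ) - n) / n)) *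
        s ^ ((2 * (n : ℝ) + 1) / (2 * n)) = oddPrimitive n c w - s * w / 2 := by
  have hn0 : (n : ℝ) ≠ 0 := by positivity
  have key := fun j => rescale_term n hn j s w hs
  rw [← hz] at key
  have hlead := key n
  rw [sub_self, zero_div, Real.rpow_zero, one_mul] at hlead
  have hlin : z * s ^ ((2 * (n : ℝ) + 1) / (2 * n)) = s * w / 2 := by
    have hr : 0 < s ^ ((1 : ℝ) / (2 * (n : ℝ))) := Real.rpow_pos_of_pos hs _
    have : (2 * (n : ℝ) + 1) / (2 * n) = 1 + 1 / (2 * n) := by field_simp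
    rw [this, Real.rpow_add hs, Real.rpow_one, hz]
    field_simp
  have hsum : (∑ j ∈ Finset.Icc 1 (n - 1),
      c j * (2 * z) ^ (2 * j + 1) / (4 * j + 2) * s ^ (((j : ℝ) - n) / n)) *
        s ^ ((2 * (n : ℝ) + 1) / (2 * n)) =
      ∑ j ∈ Finset.Icc 1 (n - 1), c j * w ^ (2 * j + 1) / (4 * j + 2) := by
    rw [Finset.sum_mul]
    refine Finset.sum_congr rfl fun j _ => ?_
    rw [← key j]
    ring
  rw [add_mul, sub_mul, hsum, hlin, oddPrimitive, ← hlead]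
  ring

/-- The envelope computation of Lemma 4.2: for `x < -T` the equation `Q w = |x|` has a
unique positive solution `z₀(|x|)`; setting `z₊(x) = z₀(|x|)/(2|x|^(1/(2n)))`, the
function `G(x) = g(z₊(x); x) |x|^((2n+1)/(2n))` is differentiable with
`G'(x) = i |x|^(1/(2n)) z₊(x)`. -/
theorem stmt13 (n : ℕ) (hn : 1 ≤ n) (τ : ℕ → ℝ)
    (Q : ℝ → ℝ)
    (hQ : Q = fun w => w ^ (2 * n) +
      ∑ j ∈ Finset.Icc 1 (n - 1), (-1 : ℝ) ^ (n + j) * τ j * w ^ (2 * j))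
    (g : ℝ → ℂ → ℂ)
    (hg : g = fun x z => Complex.I * (2 * z) ^ (2 * n + 1) / (4 * (n : ℂ) + 2) -
      Complex.I * z +
      Complex.I * ∑ j ∈ Finset.Icc 1 (n - 1),
        (-1 : ℂ) ^ (n + j) * (τ j : ℂ) * (2 * z) ^ (2 * j + 1) / (4 * (j : ℂ) + 2) *
          ((|x| ^ (((j : ℝ) - (n : ℝ)) / (n : ℝ)) : ℝ) : ℂ)) :
    ∃ T > 0, (∀ x : ℝ, x < -T → ∃! w : ℝ, 0 < w ∧ Q w = |x|) ∧
      ∀ z₀ : ℝ → ℝ, (∀ x : ℝ, x < -T → 0 < z₀ x ∧ Q (z₀ x) = |x|) →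
        ∀ x : ℝ, x < -T →
          HasDerivAt (fun y : ℝ =>
              g y (((z₀ y / (2 * |y| ^ ((1 : ℝ) / (2 * (n : ℝ)))) : ℝ) : ℂ)) *
                ((|y| ^ ((2 * (n : ℝ) + 1) / (2 * (n : ℝ))) : ℝ) : ℂ))
            (Complex.I * ((|x| ^ ((1 : ℝ) / (2 * (n : ℝ))) : ℝ) : ℂ) *
              (((z₀ x / (2 * |x| ^ ((1 : ℝ) / (2 * (n : ℝ))))) : ℝ) : ℂ)) x := by
  set c : ℕ → ℝ := fun j => (-1 : ℝ) ^ (n + j) * τ j with hc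
  have hQp : ∀ w, Q w = (evenPoly n c).eval w := fun w => by rw [evenPoly_eval, hQ]
  obtain ⟨T, hT, h⟩ := exists_threshold (evenPoly n c) (evenPoly_tendsto n hn c)
    (evenPoly_derivative_tendsto n hn c)
  have habs : ∀ y : ℝ, y < -T → |y| = -y := fun y hy => abs_of_neg (by linarith)
  simp only [hQp]
  refine ⟨T, hT, fun x hx => (h |x| (by rw [habs x hx]; linarith)).1, fun z₀ hz x hx => ?_⟩
  obtain ⟨d, hd⟩ := hasDerivAt_solution _ T hT h z₀ hz x hx
  have hF : HasDerivAt (fun y => oddPrimitive n c (z₀ y) - (-y) * z₀ y / 2) (z₀ x / 2) x := by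
    refine (((oddPrimitive_hasDerivAt n c (z₀ x)).comp x hd).sub
      (((hasDerivAt_neg x).mul hd).div_const 2)).congr_deriv ?_
    rw [(hz x hx).2, habs x hx]
    ring
  have hG := hF.ofReal_comp.const_mul Complex.I
  have hr : 0 < |x| ^ ((1 : ℝ) / (2 * (n : ℝ))) :=
    Real.rpow_pos_of_pos (by rw [habs x hx]; linarith) _
  have hval : Complex.I * ((|x| ^ ((1 : ℝ) / (2 * (n : ℝ))) : ℝ) : ℂ) *
      (((z₀ x / (2 * |x| ^ ((1 : ℝ) / (2 * (n : ℝ))))) : ℝ) : ℂ) =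
      Complex.I * ((z₀ x / 2 : ℝ) : ℂ) := by
    rw [mul_assoc, ← Complex.ofReal_mul]
    congr 2
    field_simp
  rw [hval]
  refine hG.congr_of_eventuallyEq ?_
  filter_upwards [gt_mem_nhds hx] with y hy
  have hs : 0 < |y| := by rw [habs y hy]; linarith
  have hph := phase_rescale n hn c |y| (z₀ y) hs _ rfl
  rw [← habs y hy, ← hph, hg]
  simp only [hc]
  push_cast
  ring
end

section
/- Let n ≥ 1 be an integer and κ, φ ∈ ℝ, and for x < 0 define the phase Θ(x) = (2n/(2n+1))·|x|^{(2n+1)/(2n)} − ((2n+1)/(2n))·κ·ln|x| + φ. Suppose (p_m)_{m∈ℕ} is a sequence of negative reals with p_m → −∞ such that Θ(p_m) − mπ = O(1/m) as m → ∞. Then, as m → ∞, p_m = −((2n+1)π/(2n))^{2n/(2n+1)} · m^{2n/(2n+1)} · [ 1 + (2nκ/((2n+1)π))·(ln m)/m + (2n/((2n+1)π))·(κ·ln((2n+1)π/(2n)) − φ)·(1/m) + O((ln m)²/m²) ]. -/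
/-!
With `a = 2n/(2n+1)`, `c = π/a` and `y = |p| ^ (1/a)`, the phase becomes `a y - κ log y + φ`, so the
pole condition reads `a y - κ log y + φ = mπ + O(1/m)`. Since `log y = o(y)`, this forces
`y = c m (1 + w)` with `w → 0`. Substituting,
`π m w = κ log (c m) - φ + κ log (1 + w) + O(1/m)`, which first gives `w = O(log m / m)` and then,
as `log (1 + w) = O(w)`, the sharper `w = (κ log (c m) - φ) / (π m) + O(log m / m²)`
(`stmt14_aux`). The claim follows from `|p| = (c m) ^ a (1 + w) ^ a` and
`(1 + w) ^ a = 1 + a w + O(w²)` (`rpow_one_add_bound`).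
-/

open Filter Topology Asymptotics

/-- Second-order Taylor bound for `(1 + w) ^ a`: the upper estimate is Bernoulli's inequality, the
lower one comes from `exp t ≥ 1 + t` and `log x ≥ 1 - 1/x`. -/
lemma rpow_one_add_bound {a w : ℝ} (ha0 : 0 < a) (ha1 : a ≤ 1) (hw : -(1/2) ≤ w) :
    |(1 + w) ^ a - 1 - a * w| ≤ 2 * a * w ^ 2 := by
  have h1 : 0 < 1 + w := by linarith
  have hup : (1 + w) ^ a ≤ 1 + a * w :=
    rpow_one_add_le_one_add_mul_self (by linarith) ha0.le ha1
  have hlow : 1 + a * (1 - (1 + w)⁻¹) ≤ (1 + w) ^ a := by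
    rw [Real.rpow_def_of_pos h1]
    have := Real.add_one_le_exp (Real.log (1 + w) * a)
    have h2 := Real.one_sub_inv_le_log_of_pos h1
    nlinarith
  have h3 : w - (1 - (1 + w)⁻¹) ≤ 2 * w ^ 2 := by
    have : w - (1 - (1 + w)⁻¹) = w ^ 2 / (1 + w) := by field_simp; ring
    rw [this, div_le_iff₀ h1]
    nlinarith [sq_nonneg w]
  rw [abs_le]
  constructor <;> nlinarith [sq_nonneg w]

/-- The bound `|log (1 + w)| ≤ 2 |w|` near `w = 0`. -/
lemma log_one_add_bound {w : ℝ} (hw : -(1/2) ≤ w) : |Real.log (1 + w)| ≤ 2 * |w| := by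
  have h1 : 0 < 1 + w := by linarith
  have hup := Real.log_le_sub_one_of_pos h1
  have hlow := Real.one_sub_inv_le_log_of_pos h1
  have h3 : 1 - (1 + w)⁻¹ = w / (1 + w) := by field_simp; ring
  rw [h3] at hlow
  have h4 : -(2 * |w|) ≤ w / (1 + w) := by
    rw [le_div_iff₀ h1]
    rcases abs_cases w with ⟨h, _⟩ | ⟨h, _⟩ <;> rw [h] <;> nlinarith
  rw [abs_le]
  constructor <;> linarith [le_abs_self w, abs_nonneg w]

/-- Inversion of `a y - κ log y + φ = mπ + O(1/m)`, expressed through the relative deviation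
`w = y / (c m) - 1` of `y` from its leading term `c m`, where `c = π / a`. -/
lemma stmt14_aux {a κ φ : ℝ} (ha0 : 0 < a) (y : ℕ → ℝ) (hy : Tendsto y atTop atTop)
    (hO : (fun m : ℕ => a * y m - κ * Real.log (y m) + φ - (m : ℝ) * Real.pi)
      =O[atTop] fun m : ℕ => 1 / (m : ℝ)) :
    ∃ w : ℕ → ℝ, Tendsto w atTop (𝓝 0) ∧
      (∀ᶠ m : ℕ in atTop, y m = Real.pi / a * m * (1 + w m)) ∧
      (w =O[atTop] fun m : ℕ => Real.log m / m) ∧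
      ((fun m : ℕ => w m - (κ * Real.log (Real.pi / a * m) - φ) / (Real.pi * m))
        =O[atTop] fun m : ℕ => Real.log m / (m : ℝ) ^ 2) := by
  have hπ := Real.pi_pos
  have hc : 0 < Real.pi / a := by positivity
  have hcast : Tendsto (fun m : ℕ => (m : ℝ)) atTop atTop := tendsto_natCast_atTop_atTop
  have hlogm : Tendsto (fun m : ℕ => Real.log m) atTop atTop := Real.tendsto_log_atTop.comp hcast
  have hm1 : ∀ᶠ m : ℕ in atTop, (1 : ℝ) ≤ m := hcast.eventually_ge_atTop 1
  have hl1 : ∀ᶠ m : ℕ in atTop, (1 : ℝ) ≤ Real.log m := hlogm.eventually_ge_atTop 1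
  have hinv : (fun m : ℕ => 1 / (m : ℝ)) =O[atTop] fun _ : ℕ => (1 : ℝ) := by
    refine IsBigO.of_bound 1 ?_
    filter_upwards [hm1] with m hm
    simp only [Real.norm_eq_abs, abs_one, mul_one]
    rw [abs_of_pos (by positivity), div_le_one (by linarith)]
    exact hm
  have h1log : (fun _ : ℕ => (1 : ℝ)) =O[atTop] fun m : ℕ => Real.log m := by
    refine IsBigO.of_bound 1 ?_
    filter_upwards [hl1] with m hm
    simp only [Real.norm_eq_abs, abs_one, one_mul]
    exact hm.trans (le_abs_self _)
  -- `1 = o(y)` and `log y = o(y)` give `m π ~ a y`.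
  have h1y : (fun _ : ℕ => (1 : ℝ)) =o[atTop] y :=
    (isLittleO_const_left.2 (Or.inr (tendsto_norm_atTop_atTop.comp hy)))
  have hlogy : (fun m => Real.log (y m)) =o[atTop] y := Real.isLittleO_log_id_atTop.comp_tendsto hy
  have hay : (fun m : ℕ => (m : ℝ) * Real.pi - a * y m) =o[atTop] y := by
    have h := ((h1y.const_mul_left φ).sub (hlogy.const_mul_left κ)).sub
      ((hO.trans hinv).trans_isLittleO h1y)
    refine h.congr_left fun m => ?_
    ring
  have hy0 : ∀ᶠ m in atTop, 0 < y m := hy.eventually_gt_atTop 0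
  have hratio : Tendsto (fun m : ℕ => (m : ℝ) / y m) atTop (𝓝 (a / Real.pi)) := by
    have h := ((hay.tendsto_div_nhds_zero).add_const a).div_const Real.pi
    rw [zero_add] at h
    refine h.congr' ?_
    filter_upwards [hy0] with m hm
    field_simp
    ring
  have hw0 : Tendsto (fun m : ℕ => y m / (Real.pi / a * m) - 1) atTop (𝓝 0) := by
    have h := ((hratio.inv₀ (by positivity)).mul_const (a / Real.pi)).sub_const 1
    have e : (a / Real.pi)⁻¹ * (a / Real.pi) - 1 = 0 := by field_simp; ring
    rw [e] at h
    refine h.congr' ?_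
    filter_upwards [hy0, hm1] with m hm hm'
    have : (0 : ℝ) < m := by linarith
    field_simp
  set w : ℕ → ℝ := fun m : ℕ => y m / (Real.pi / a * m) - 1 with hw
  have hyw : ∀ᶠ m : ℕ in atTop, y m = Real.pi / a * m * (1 + w m) := by
    filter_upwards [hm1] with m hm
    have : (0 : ℝ) < m := by linarith
    simp only [hw]
    field_simp
    ring
  have hwhalf : ∀ᶠ m : ℕ in atTop, -(1/2) ≤ w m :=
    hw0.eventually_const_le (by norm_num)
  have hlogw : (fun m => Real.log (1 + w m)) =O[atTop] w := by
    refine IsBigO.of_bound 2 ?_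
    filter_upwards [hwhalf] with m hm
    exact log_one_add_bound hm
  -- The exact identity obtained by substituting `y = c m (1 + w)` and dividing by `π m`.
  have key : (fun m : ℕ => w m - (κ * Real.log (Real.pi / a * m) - φ) / (Real.pi * m)) =ᶠ[atTop]
      fun m : ℕ => (κ * Real.log (1 + w m) +
        (a * y m - κ * Real.log (y m) + φ - (m : ℝ) * Real.pi)) * (1 / Real.pi * (1 / m)) := by
    filter_upwards [hyw, hm1, hwhalf] with m hm hm' hwm
    have hmpos : (0 : ℝ) < m := by linarith
    have hl : Real.log (y m) = Real.log (Real.pi / a * m) + Real.log (1 + w m) := by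
      rw [hm, Real.log_mul (by positivity) (by linarith)]
    rw [hl, hm]
    generalize w m = u
    generalize Real.log (Real.pi / a * m) = L
    generalize Real.log (1 + u) = K
    field_simp
    ring
  have hwone : w =O[atTop] fun _ : ℕ => (1 : ℝ) := hw0.isBigO_one ℝ
  have hinvO : (fun m : ℕ => 1 / Real.pi * (1 / (m : ℝ))) =O[atTop] fun m : ℕ => 1 / (m : ℝ) :=
    (isBigO_refl _ _).const_mul_left _
  have hmain : (fun m : ℕ => (κ * Real.log (Real.pi / a * m) - φ) / (Real.pi * m))
      =O[atTop] fun m : ℕ => Real.log m / m := by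
    have h : (fun m : ℕ => (κ * Real.log (Real.pi / a) - φ) * 1 + κ * Real.log m)
        =O[atTop] fun m : ℕ => Real.log m :=
      (h1log.const_mul_left _).add ((isBigO_refl _ _).const_mul_left _)
    refine (h.mul hinvO).congr' ?_ ?_
    · filter_upwards [hm1] with m hm
      have hmpos : (0 : ℝ) < m := by linarith
      rw [Real.log_mul hc.ne' hmpos.ne']
      generalize Real.log (Real.pi / a) = L
      field_simp
      ring
    · exact Eventually.of_forall fun m => by simp [div_eq_mul_inv]
  have hwO : w =O[atTop] fun m : ℕ => Real.log m / m := by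
    have h1 : (fun m : ℕ => w m - (κ * Real.log (Real.pi / a * m) - φ) / (Real.pi * m))
        =O[atTop] fun m : ℕ => Real.log m / m := by
      refine key.trans_isBigO ?_
      refine ((((hlogw.trans hwone).const_mul_left κ).add (hO.trans hinv)).trans h1log
        |>.mul hinvO).congr_right fun m => ?_
      ring
    refine (h1.add hmain).congr_left fun m => ?_
    ring
  refine ⟨w, hw0, hyw, hwO, key.trans_isBigO ?_⟩
  have hil : (fun m : ℕ => 1 / (m : ℝ)) =O[atTop] fun m : ℕ => Real.log m / m :=
    (h1log.mul (isBigO_refl (fun m : ℕ => 1 / (m : ℝ)) atTop)).congr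
      (fun m => by ring) (fun m => by ring)
  refine ((((hlogw.trans hwO).const_mul_left κ).add (hO.trans hil)).mul hinvO).congr_right
    fun m => ?_
  ring

/-- Asymptotic inversion of the pole condition `Θ(p_m) ≈ mπ` (Corollary 2.8): the poles
satisfy `p_m = -((2n+1)π/(2n))^(2n/(2n+1)) m^(2n/(2n+1)) [1 + (2nκ/((2n+1)π)) (ln m)/m +
(2n/((2n+1)π))(κ ln((2n+1)π/(2n)) - φ)/m + O((ln m)²/m²)]`. -/
theorem stmt14 (n : ℕ) (hn : 1 ≤ n) (κ φ : ℝ)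
    (Θ : ℝ → ℝ)
    (hΘ : Θ = fun x : ℝ =>
      (2 * (n : ℝ) / (2 * (n : ℝ) + 1)) * |x| ^ ((2 * (n : ℝ) + 1) / (2 * (n : ℝ))) -
        ((2 * (n : ℝ) + 1) / (2 * (n : ℝ))) * κ * Real.log |x| + φ)
    (p : ℕ → ℝ) (hp : ∀ m, p m < 0)
    (hlim : Tendsto p atTop atBot)
    (hO : (fun m : ℕ => Θ (p m) - (m : ℝ) * Real.pi) =O[atTop] fun m : ℕ => 1 / (m : ℝ)) :
    (fun m : ℕ => p m +
        ((2 * (n : ℝ) + 1) * Real.pi / (2 * (n : ℝ))) ^ ((2 * (n : ℝ)) / (2 * (n : ℝ) + 1)) *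
          (m : ℝ) ^ ((2 * (n : ℝ)) / (2 * (n : ℝ) + 1)) *
          (1 + (2 * (n : ℝ) * κ / ((2 * (n : ℝ) + 1) * Real.pi)) * Real.log m / m +
            (2 * (n : ℝ) / ((2 * (n : ℝ) + 1) * Real.pi)) *
              (κ * Real.log ((2 * (n : ℝ) + 1) * Real.pi / (2 * (n : ℝ))) - φ) / m))
      =O[atTop]
      fun m : ℕ => (m : ℝ) ^ ((2 * (n : ℝ)) / (2 * (n : ℝ) + 1)) *
        (Real.log m) ^ 2 / (m : ℝ) ^ 2 := by
  have hπ := Real.pi_pos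
  have hn0 : (0 : ℝ) < n := by exact_mod_cast hn
  obtain ⟨a, ha⟩ : ∃ a : ℝ, a = 2 * (n : ℝ) / (2 * (n : ℝ) + 1) := ⟨_, rfl⟩
  have ha0 : 0 < a := by rw [ha]; positivity
  have ha1 : a ≤ 1 := by rw [ha, div_le_one (by positivity)]; linarith
  have hainv : (2 * (n : ℝ) + 1) / (2 * (n : ℝ)) = a⁻¹ := by rw [ha, inv_div]
  have hc : (2 * (n : ℝ) + 1) * Real.pi / (2 * (n : ℝ)) = Real.pi / a := by
    rw [ha]; field_simp
  have hd : 2 * (n : ℝ) * κ / ((2 * (n : ℝ) + 1) * Real.pi) = a * κ / Real.pi := by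
    rw [ha]; field_simp
  have he : 2 * (n : ℝ) / ((2 * (n : ℝ) + 1) * Real.pi) = a / Real.pi := by
    rw [ha]; field_simp
  rw [hc, hd, he]
  rw [hΘ, hainv] at hO
  rw [← ha] at hO ⊢
  have hcpos : 0 < Real.pi / a := by positivity
  have habs : Tendsto (fun m => |p m|) atTop atTop := tendsto_abs_atBot_atTop.comp hlim
  have hy : Tendsto (fun m => |p m| ^ a⁻¹) atTop atTop :=
    (tendsto_rpow_atTop (inv_pos.2 ha0)).comp habs
  obtain ⟨w, hw0, hyw, hwO, hwO'⟩ := stmt14_aux (κ := κ) (φ := φ) ha0 _ hy (by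
    refine hO.congr_left fun m => ?_
    rw [Real.log_rpow (abs_pos.2 (hp m).ne)]
    ring)
  have hcast : Tendsto (fun m : ℕ => (m : ℝ)) atTop atTop := tendsto_natCast_atTop_atTop
  have hm1 : ∀ᶠ m : ℕ in atTop, (1 : ℝ) ≤ m := hcast.eventually_ge_atTop 1
  have hl1 : ∀ᶠ m : ℕ in atTop, (1 : ℝ) ≤ Real.log m :=
    (Real.tendsto_log_atTop.comp hcast).eventually_ge_atTop 1
  have hwhalf : ∀ᶠ m : ℕ in atTop, -(1/2) ≤ w m :=
    hw0.eventually_const_le (by norm_num)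
  have hT : (fun m => (1 + w m) ^ a - 1 - a * w m)
      =O[atTop] fun m : ℕ => Real.log m ^ 2 / (m : ℝ) ^ 2 := by
    have h : (fun m => (1 + w m) ^ a - 1 - a * w m) =O[atTop] fun m => w m ^ 2 := by
      refine IsBigO.of_bound (2 * a) ?_
      filter_upwards [hwhalf] with m hm
      rw [Real.norm_eq_abs, Real.norm_eq_abs, abs_of_nonneg (sq_nonneg (w m))]
      exact rpow_one_add_bound ha0 ha1 hm
    refine (h.trans (hwO.pow 2)).congr_right fun m => ?_
    rw [div_pow]
  have hlog2 : (fun m : ℕ => Real.log m / (m : ℝ) ^ 2)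
      =O[atTop] fun m : ℕ => Real.log m ^ 2 / (m : ℝ) ^ 2 := by
    refine IsBigO.of_bound 1 ?_
    filter_upwards [hl1] with m hm
    rw [one_mul, Real.norm_eq_abs, Real.norm_eq_abs, abs_of_nonneg (by positivity),
      abs_of_nonneg (by positivity)]
    gcongr
    nlinarith
  have hS := hT.add ((hwO'.trans hlog2).const_mul_left a)
  have hfin := ((isBigO_refl (fun m : ℕ => (m : ℝ) ^ a) atTop).const_mul_left
    (-(Real.pi / a) ^ a)).mul hS
  refine hfin.congr' ?_ (Eventually.of_forall fun m => by ring)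
  filter_upwards [hyw, hm1, hwhalf] with m hm hm' hwm
  have hmpos : (0 : ℝ) < m := by linarith
  have hpm : p m = -((Real.pi / a) ^ a * (m : ℝ) ^ a * (1 + w m) ^ a) := by
    have h1 : |p m| = (|p m| ^ a⁻¹) ^ a := by
      rw [← Real.rpow_mul (abs_nonneg _), inv_mul_cancel₀ ha0.ne', Real.rpow_one]
    rw [hm, Real.mul_rpow (by positivity) (by linarith),
      Real.mul_rpow hcpos.le hmpos.le, abs_of_neg (hp m)] at h1
    linarith
  rw [hpm, Real.log_mul hcpos.ne' hmpos.ne']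
  generalize Real.log (Real.pi / a) = L
  generalize (Real.pi / a) ^ a = A
  field_simp
  ring
end

section
/- Let ν ∈ ℂ, let z₊ be a nonzero real number, and let c ∈ ℂ with c² ≠ 1. Define A = [[0, 2z₊c/(1 − c²)], [0, 2z₊c²/(1 − c²)]], B = [[−2z₊c²/(1 − c²), 0], [−2z₊c/(1 − c²), 0]], s(z) = ((z + z₊)/(z − z₊))^ν with the principal branch of the complex power, and P(z) = (I + (z + z₊)^{−1}A + (z − z₊)^{−1}B) · diag(s(z), s(z)^{−1}) for z ∈ ℂ outside the segment [−z₊, z₊]. Then, as z → ∞ in ℂ, z·(P(z) − I) converges to the matrix [[2z₊ν − 2z₊c²/(1 − c²), 2z₊c/(1 − c²)], [−2z₊c/(1 − c²), −2z₊ν + 2z₊c²/(1 − c²)]]. -/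
/-!
Put `s z = ((z + a) / (z - a)) ^ ν`. In the variable `w = z⁻¹` this is `((1 + a w) / (1 - a w)) ^ ν`,
which is differentiable at `w = 0` with value `1` and derivative `2 a ν`; reading the derivative as a
limit of slopes gives `z (s z - 1) → 2 a ν` as `z → ∞`, hence also `s z → 1`. Replacing `ν` by `-ν`
gives the same facts for `(s z)⁻¹`. With `z / (z ± a) → 1`, each entry of `z (P z - 1)` is a
polynomial in quantities with known limits.
-/

open Matrix Complex Filter Topology Bornology

/-- The first-order expansion `((z + a) / (z - a)) ^ ν = 1 + 2 a ν / z + o(1 / z)` at infinity,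
obtained from the derivative at `0` in the variable `z⁻¹`. -/
lemma tendsto_mul_cpow_sub_one (a ν : ℂ) :
    Tendsto (fun z : ℂ => z * (((z + a) / (z - a)) ^ ν - 1)) (cobounded ℂ) (𝓝 (2 * a * ν)) := by
  have hd : HasDerivAt (fun w : ℂ => ((1 + a * w) / (1 - a * w)) ^ ν) (2 * a * ν) 0 := by
    have h1 : HasDerivAt (fun w : ℂ => 1 + a * w) a 0 := by
      simpa using ((hasDerivAt_id (0 : ℂ)).const_mul a).const_add 1
    have h2 : HasDerivAt (fun w : ℂ => 1 - a * w) (-a) 0 := by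
      simpa using ((hasDerivAt_id (0 : ℂ)).const_mul a).const_sub 1
    have h3 := (h1.fun_div h2 (by simp)).cpow_const (c := ν) (by simp)
    convert h3 using 1
    simp
    ring
  have hslope := hasDerivAt_iff_tendsto_slope.mp hd
  have hinv : Tendsto (fun z : ℂ => z⁻¹) (cobounded ℂ) (𝓝[≠] 0) :=
    tendsto_inv₀_cobounded'
  refine (hslope.comp hinv).congr' ?_
  filter_upwards [eventually_ne_cobounded (0 : ℂ)] with z hz
  have hq : (1 + a * z⁻¹) / (1 - a * z⁻¹) = (z + a) / (z - a) := by
    rw [← mul_div_mul_left _ _ hz]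
    congr 1 <;> field_simp
  simp [slope_def_field, hq]
  ring

lemma tendsto_mul_inv_add_const (a : ℂ) :
    Tendsto (fun z : ℂ => z * (z + a)⁻¹) (cobounded ℂ) (𝓝 1) := by
  have h : Tendsto (fun z : ℂ => (1 + a * z⁻¹)⁻¹) (cobounded ℂ) (𝓝 1) := by
    have := ((tendsto_inv₀_cobounded (α := ℂ)).const_mul a).const_add 1
    simpa using this.inv₀ (by simp)
  refine h.congr' ?_
  filter_upwards [eventually_ne_cobounded (0 : ℂ)] with z hz
  have : 1 + a * z⁻¹ = (z + a) * z⁻¹ := by field_simp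
  rw [this, mul_inv, inv_inv, mul_comm]

lemma tendsto_cpow_one (a ν : ℂ) :
    Tendsto (fun z : ℂ => ((z + a) / (z - a)) ^ ν) (cobounded ℂ) (𝓝 1) := by
  have h := ((tendsto_inv₀_cobounded (α := ℂ)).mul (tendsto_mul_cpow_sub_one a ν)).add_const 1
  simp only [zero_mul, zero_add] at h
  refine h.congr' ?_
  filter_upwards [eventually_ne_cobounded (0 : ℂ)] with z hz
  rw [inv_mul_cancel_left₀ hz, sub_add_cancel]

/-- The coefficient `P̃₁^(∞)` in the large-`z` expansion of the modified global
parametrix `P̃^(∞)(z) = V(z) ((z - z₋)/(z - z₊))^(νσ₃)` with `z₋ = -z₊`: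
`z (P(z) - I) → [[2z₊ν - 2z₊c²/(1-c²), 2z₊c/(1-c²)], [-2z₊c/(1-c²), -2z₊ν + 2z₊c²/(1-c²)]]`
as `z → ∞`. -/
theorem stmt15 (ν : ℂ) (zp : ℝ) (hzp : zp ≠ 0) (c : ℂ) (hc : c ^ 2 ≠ 1)
    (A B : Matrix (Fin 2) (Fin 2) ℂ)
    (hA : A = !![0, 2 * (zp : ℂ) * c / (1 - c ^ 2); 0, 2 * (zp : ℂ) * c ^ 2 / (1 - c ^ 2)])
    (hB : B = !![-(2 * (zp : ℂ) * c ^ 2 / (1 - c ^ 2)), 0;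
                 -(2 * (zp : ℂ) * c / (1 - c ^ 2)), 0])
    (s : ℂ → ℂ) (hs : s = fun z => ((z + (zp : ℂ)) / (z - (zp : ℂ))) ^ ν)
    (P : ℂ → Matrix (Fin 2) (Fin 2) ℂ)
    (hP : P = fun z => (1 + (z + (zp : ℂ))⁻¹ • A + (z - (zp : ℂ))⁻¹ • B) *
      !![s z, 0; 0, (s z)⁻¹]) :
    Tendsto (fun z : ℂ => z • (P z - 1)) (cobounded ℂ)
      (𝓝 !![2 * (zp : ℂ) * ν - 2 * (zp : ℂ) * c ^ 2 / (1 - c ^ 2),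
              2 * (zp : ℂ) * c / (1 - c ^ 2);
            -(2 * (zp : ℂ) * c / (1 - c ^ 2)),
              -(2 * (zp : ℂ) * ν) + 2 * (zp : ℂ) * c ^ 2 / (1 - c ^ 2)]) := by
  have hs1 : Tendsto s (cobounded ℂ) (𝓝 1) := hs ▸ tendsto_cpow_one zp ν
  have hs2 : Tendsto (fun z => z * (s z - 1)) (cobounded ℂ) (𝓝 (2 * zp * ν)) :=
    hs ▸ tendsto_mul_cpow_sub_one zp ν
  have hi : ∀ z, (s z)⁻¹ = ((z + (zp : ℂ)) / (z - (zp : ℂ))) ^ (-ν) := fun z => by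
    rw [hs, cpow_neg]
  have ht1 : Tendsto (fun z => (s z)⁻¹) (cobounded ℂ) (𝓝 1) := by
    simpa only [hi] using tendsto_cpow_one zp (-ν)
  have ht2 : Tendsto (fun z => z * ((s z)⁻¹ - 1)) (cobounded ℂ) (𝓝 (2 * zp * -ν)) := by
    simpa only [hi] using tendsto_mul_cpow_sub_one zp (-ν)
  have hp := tendsto_mul_inv_add_const (zp : ℂ)
  have hm : Tendsto (fun z : ℂ => z * (z - zp)⁻¹) (cobounded ℂ) (𝓝 1) := by
    simpa only [sub_eq_add_neg] using tendsto_mul_inv_add_const (-(zp : ℂ))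
  clear hs hi
  subst hP hA hB
  -- The entries of `A` and `B` are, up to sign, the two constants `k` and `l`.
  generalize 2 * (zp : ℂ) * c ^ 2 / (1 - c ^ 2) = k
  generalize 2 * (zp : ℂ) * c / (1 - c ^ 2) = l
  refine tendsto_pi_nhds.mpr fun i => tendsto_pi_nhds.mpr fun j => ?_
  fin_cases i <;> fin_cases j
  · convert hs2.sub ((hm.mul hs1).const_mul k) using 2
    · simp [Matrix.mul_apply, Fin.sum_univ_two]
      ring
    · simp
  · convert (hp.mul ht1).const_mul l using 2
    · simp [Matrix.mul_apply, Fin.sum_univ_two]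
      ring
    · simp
  · convert (hm.mul hs1).const_mul (-l) using 2
    · simp [Matrix.mul_apply, Fin.sum_univ_two]
      ring
    · simp
  · convert ht2.add ((hp.mul ht1).const_mul k) using 2
    · simp [Matrix.mul_apply, Fin.sum_univ_two]
      ring
    · simp
end
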